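/- Let β > 0, T > 0, h = T/(N+1), t_j = jh, and let y : [0,T] → ℝ be three times continuously differentiable. For j ≥ 1 let L²_j y be the quadratic Lagrange interpolant of y at t_{j−1}, t_j, t_{j+1}, and let L²₀ y be the quadratic Lagrange interpolant of y at t₀, t_{1/2} := h/2, and t₁. Then for every 1 ≤ n ≤ N the truncation error Tₙ₊₁ = β Σ_{j=0}^{n} ∫_{t_j}^{t_{j+1}} (y(s) − L²_j y(s)) exp(−β(t_{n+1}−s)) ds satisfies |Tₙ₊₁| ≤ (‖y‴‖_∞ / 12) (1 − exp(−β t_{n+1})) h³, where ‖y‴‖_∞ = sup_{t∈[0,T]} |y‴(t)|. -/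

import Mathlib

open Real MeasureTheory Finset

/-- The quadratic Lagrange interpolant at nodes `a, b, c` with values `ya, yb, yc`. -/
noncomputable def lagInterp2 (a b c ya yb yc s : ℝ) : ℝ :=
  ya * ((s - b) * (s - c)) / ((a - b) * (a - c))
    + yb * ((s - a) * (s - c)) / ((b - a) * (b - c))
    + yc * ((s - a) * (s - b)) / ((c - a) * (c - b))

/-! By repeated use of Rolle's theorem, the error of the Lagrange interpolant of a `C^n` function
through `n` nodes is `f^(n)(ξ) / n!` times the product of the distances to the nodes. For three
nodes and a point on the `j`-th step, two of the distances multiply to at most `(step/2)²` and the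
third is at most `2h`, so the error is at most `(‖y‴‖_∞ / 6) (h³ / 2)`. The kernel
`β exp (-β (t - s))` has the primitive `exp (-β (t - s))`, so the step contributions telescope. -/

theorem exists_iteratedDerivWithin_eq_zero {l r : ℝ} (hlr : l < r) {n : ℕ} {f : ℝ → ℝ}
    (hf : ContDiffOn ℝ n f (Set.Icc l r)) {x : Fin (n + 1) → ℝ} (hx : StrictMono x)
    (hxI : ∀ i, x i ∈ Set.Icc l r) (hfx : ∀ i, f (x i) = 0) :
    ∃ ξ ∈ Set.Icc l r, iteratedDerivWithin n f (Set.Icc l r) ξ = 0 := by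
  induction n generalizing f with
  | zero => exact ⟨x 0, hxI 0, by rw [iteratedDerivWithin_zero, hfx]⟩
  | succ n ih =>
    have hu : UniqueDiffOn ℝ (Set.Icc l r) := uniqueDiffOn_Icc hlr
    have hdiff : DifferentiableOn ℝ f (Set.Icc l r) := hf.differentiableOn (by simp)
    have rolle (i : Fin (n + 1)) : ∃ ξ ∈ Set.Ioo (x i.castSucc) (x i.succ),
        derivWithin f (Set.Icc l r) ξ = 0 := by
      refine exists_hasDerivAt_eq_zero (hx i.castSucc_lt_succ)
        (hf.continuousOn.mono (Set.Icc_subset_Icc (hxI _).1 (hxI _).2)) (by rw [hfx, hfx])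
        fun ξ hξ => ?_
      have hlξ : l < ξ := (hxI _).1.trans_lt hξ.1
      have hξr : ξ < r := hξ.2.trans_le (hxI _).2
      exact (hdiff ξ ⟨hlξ.le, hξr.le⟩).hasDerivWithinAt.hasDerivAt (Icc_mem_nhds hlξ hξr)
    choose ξ hξ hdξ using rolle
    have hξ_mono : StrictMono ξ := fun i j hij =>
      (hξ i).2.trans_le ((hx.monotone (Fin.succ_le_castSucc_iff.2 hij)).trans (hξ j).1.le)
    rw [iteratedDerivWithin_succ']
    exact ih (hf.derivWithin hu (by simp)) hξ_mono
      (fun i => ⟨(hxI _).1.trans (hξ i).1.le, (hξ i).2.le.trans (hxI _).2⟩) hdξ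

theorem exists_iteratedDerivWithin_eq_zero_of_finset {l r : ℝ} (hlr : l < r) {n : ℕ} {f : ℝ → ℝ}
    (hf : ContDiffOn ℝ n f (Set.Icc l r)) {s : Finset ℝ} (hs : #s = n + 1)
    (hsI : ∀ x ∈ s, x ∈ Set.Icc l r) (hfs : ∀ x ∈ s, f x = 0) :
    ∃ ξ ∈ Set.Icc l r, iteratedDerivWithin n f (Set.Icc l r) ξ = 0 :=
  exists_iteratedDerivWithin_eq_zero hlr hf (s.orderEmbOfFin hs).strictMono
    (fun i => hsI _ (s.orderEmbOfFin_mem hs i)) fun i => hfs _ (s.orderEmbOfFin_mem hs i)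

theorem iteratedDeriv_polynomial_eval {𝕜 : Type*} [NontriviallyNormedField 𝕜]
    (P : Polynomial 𝕜) (n : ℕ) (x : 𝕜) :
    iteratedDeriv n (fun t => P.eval t) x = (Polynomial.derivative^[n] P).eval x := by
  induction n generalizing P with
  | zero => rw [iteratedDeriv_zero, Function.iterate_zero_apply]
  | succ n ih =>
    have hderiv : deriv (fun t => P.eval t) = fun t => P.derivative.eval t :=
      funext fun _ => P.deriv
    rw [iteratedDeriv_succ', hderiv, ih, Function.iterate_succ_apply]

theorem iterate_derivative_of_natDegree_le {R : Type*} [Semiring R] {P : Polynomial R} {n : ℕ}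
    (hP : P.natDegree ≤ n) :
    Polynomial.derivative^[n] P = Polynomial.C (n.factorial * P.coeff n) := by
  have hdeg : (Polynomial.derivative^[n] P).natDegree ≤ 0 :=
    (P.natDegree_iterate_derivative n).trans (Nat.sub_eq_zero_of_le hP).le
  rw [Polynomial.eq_C_of_natDegree_le_zero hdeg, Polynomial.coeff_iterate_derivative, zero_add,
    Nat.descFactorial_self, nsmul_eq_mul]

theorem iteratedDerivWithin_polynomial_eval_of_natDegree_le {𝕜 : Type*}
    [NontriviallyNormedField 𝕜] {s : Set 𝕜} (hs : UniqueDiffOn 𝕜 s) {x : 𝕜} (hx : x ∈ s)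
    {P : Polynomial 𝕜} {n : ℕ} (hP : P.natDegree ≤ n) :
    iteratedDerivWithin n (fun t => P.eval t) s x = n.factorial * P.coeff n := by
  have hPdiff : ContDiff 𝕜 n fun t => P.eval t := P.contDiff_aeval n
  rw [iteratedDerivWithin_eq_iteratedDeriv hs hPdiff.contDiffAt hx,
    iteratedDeriv_polynomial_eval, iterate_derivative_of_natDegree_le hP, Polynomial.eval_C]

theorem exists_iteratedDerivWithin_eq_factorial_mul_coeff {l r : ℝ} (hlr : l < r) {n : ℕ}
    {f : ℝ → ℝ} (hf : ContDiffOn ℝ n f (Set.Icc l r)) {P : Polynomial ℝ} (hP : P.natDegree ≤ n)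
    {s : Finset ℝ} (hs : #s = n + 1) (hsI : ∀ x ∈ s, x ∈ Set.Icc l r)
    (hfP : ∀ x ∈ s, f x = P.eval x) :
    ∃ ξ ∈ Set.Icc l r, iteratedDerivWithin n f (Set.Icc l r) ξ = n.factorial * P.coeff n := by
  have hu : UniqueDiffOn ℝ (Set.Icc l r) := uniqueDiffOn_Icc hlr
  have hPdiff : ContDiff ℝ n fun t => P.eval t := P.contDiff_aeval n
  obtain ⟨ξ, hξ, hξ0⟩ := exists_iteratedDerivWithin_eq_zero_of_finset hlr
    (f := f - fun t => P.eval t) (hf.sub hPdiff.contDiffOn) hs hsI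
    fun x hx => sub_eq_zero.2 (hfP x hx)
  rw [iteratedDerivWithin_sub hξ hu (hf ξ hξ) hPdiff.contDiffWithinAt,
    iteratedDerivWithin_polynomial_eval_of_natDegree_le hu hξ hP, sub_eq_zero] at hξ0
  exact ⟨ξ, hξ, hξ0⟩

section Interpolate

variable {ι F : Type*} [DecidableEq ι] [Field F] {s : Finset ι} {v : ι → F}

theorem natDegree_interpolate_add_C_mul_nodal_le (hv : Set.InjOn v s) (u : ι → F) (K : F) :
    (Lagrange.interpolate s v u + Polynomial.C K * Lagrange.nodal s v).natDegree ≤ #s :=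
  Polynomial.natDegree_add_le_of_degree_le
    (Polynomial.natDegree_le_of_degree_le (Lagrange.degree_interpolate_lt u hv).le)
    ((Polynomial.natDegree_C_mul_le K _).trans_eq Lagrange.natDegree_nodal)

theorem coeff_card_interpolate_add_C_mul_nodal (hv : Set.InjOn v s) (u : ι → F) (K : F) :
    (Lagrange.interpolate s v u + Polynomial.C K * Lagrange.nodal s v).coeff #s = K := by
  have hnodal : (Lagrange.nodal s v).coeff #s = 1 := by
    simpa only [Lagrange.natDegree_nodal] using
      (Lagrange.nodal_monic (s := s) (v := v)).coeff_natDegree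
  rw [Polynomial.coeff_add, Polynomial.coeff_C_mul, hnodal, mul_one,
    Polynomial.coeff_eq_zero_of_degree_lt (Lagrange.degree_interpolate_lt u hv), zero_add]

end Interpolate

theorem exists_sub_eval_interpolate_eq {ι : Type*} [DecidableEq ι] {s : Finset ι} {v : ι → ℝ}
    {l r : ℝ} (hlr : l < r) {f : ℝ → ℝ} (hf : ContDiffOn ℝ #s f (Set.Icc l r))
    (hv : Set.InjOn v s) (hvI : ∀ i ∈ s, v i ∈ Set.Icc l r) {x : ℝ} (hx : x ∈ Set.Icc l r) :
    ∃ ξ ∈ Set.Icc l r, f x - (Lagrange.interpolate s v (f ∘ v)).eval x =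
      iteratedDerivWithin #s f (Set.Icc l r) ξ / (#s).factorial * ∏ i ∈ s, (x - v i) := by
  by_cases hxs : x ∈ s.image v
  · obtain ⟨i, hi, rfl⟩ := mem_image.1 hxs
    refine ⟨v i, hx, ?_⟩
    rw [Lagrange.eval_interpolate_at_node _ hv hi, prod_eq_zero hi (sub_self _), mul_zero,
      Function.comp_apply, sub_self]
  have hω : (Lagrange.nodal s v).eval x ≠ 0 :=
    Lagrange.eval_nodal_not_at_node fun i hi h => hxs (mem_image.2 ⟨i, hi, h.symm⟩)
  -- This `K` makes the interpolant, corrected by `K` times the nodal polynomial, exact at `x` too.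
  obtain ⟨K, hK⟩ : ∃ K, f x - (Lagrange.interpolate s v (f ∘ v)).eval x =
      K * (Lagrange.nodal s v).eval x := ⟨_, (div_mul_cancel₀ _ hω).symm⟩
  have heval : ∀ t ∈ insert x (s.image v), f t =
      (Lagrange.interpolate s v (f ∘ v) + Polynomial.C K * Lagrange.nodal s v).eval t := by
    simp only [forall_mem_insert, forall_mem_image, Polynomial.eval_add, Polynomial.eval_mul,
      Polynomial.eval_C]
    refine ⟨by linear_combination hK, fun i hi => ?_⟩
    rw [Lagrange.eval_interpolate_at_node _ hv hi, Lagrange.eval_nodal_at_node hi, mul_zero,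
      add_zero, Function.comp_apply]
  obtain ⟨ξ, hξ, hfξ⟩ := exists_iteratedDerivWithin_eq_factorial_mul_coeff hlr hf
    (natDegree_interpolate_add_C_mul_nodal_le hv (f ∘ v) K)
    (by rw [card_insert_of_notMem hxs, card_image_of_injOn hv])
    (by simpa only [forall_mem_insert, forall_mem_image] using ⟨hx, hvI⟩) heval
  rw [coeff_card_interpolate_add_C_mul_nodal hv] at hfξ
  refine ⟨ξ, hξ, ?_⟩
  rw [hK, hfξ, Lagrange.eval_nodal, mul_div_cancel_left₀ K (by positivity)]

theorem lagInterp2_eq_eval_interpolate (a b c ya yb yc s : ℝ) :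
    lagInterp2 a b c ya yb yc s =
      (Lagrange.interpolate univ ![a, b, c] ![ya, yb, yc]).eval s := by
  have erase_zero : (univ : Finset (Fin 3)).erase 0 = {1, 2} := by decide
  have erase_one : (univ : Finset (Fin 3)).erase 1 = {0, 2} := by decide
  have erase_two : (univ : Finset (Fin 3)).erase 2 = {0, 1} := by decide
  simp only [lagInterp2, Lagrange.interpolate_apply, Lagrange.basis, Lagrange.basisDivisor,
    Fin.sum_univ_three, erase_zero, erase_one, erase_two, prod_insert, prod_singleton,
    mem_singleton, Fin.reduceEq, not_false_eq_true, Matrix.cons_val, Polynomial.eval_add,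
    Polynomial.eval_mul, Polynomial.eval_C, Polynomial.eval_sub, Polynomial.eval_X, div_eq_mul_inv,
    mul_inv_rev]
  ring

theorem abs_sub_lagInterp2_le {l r M : ℝ} {f : ℝ → ℝ} (hf : ContDiffOn ℝ 3 f (Set.Icc l r))
    (hM : ∀ x ∈ Set.Icc l r, |iteratedDerivWithin 3 f (Set.Icc l r) x| ≤ M)
    {a b c s : ℝ} (hla : l ≤ a) (hab : a < b) (hbc : b < c) (hcr : c ≤ r)
    (hs : s ∈ Set.Icc l r) :
    |f s - lagInterp2 a b c (f a) (f b) (f c) s| ≤ M / 6 * |(s - a) * (s - b) * (s - c)| := by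
  have hv : StrictMono ![a, b, c] := by
    simp [Fin.strictMono_iff_lt_succ, Fin.forall_fin_two, hab, hbc]
  have hvI : ∀ i ∈ univ, ![a, b, c] i ∈ Set.Icc l r := fun i _ =>
    ⟨hla.trans (hv.monotone (Fin.zero_le i)), (hv.monotone (Fin.le_last i)).trans hcr⟩
  have hvals : f ∘ ![a, b, c] = ![f a, f b, f c] := by
    ext i; fin_cases i <;> rfl
  obtain ⟨ξ, hξ, herr⟩ := exists_sub_eval_interpolate_eq (s := univ)
    (hla.trans_lt (hab.trans (hbc.trans_le hcr))) (by simpa using hf) hv.injective.injOn hvI hs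
  rw [hvals, ← lagInterp2_eq_eval_interpolate, Fin.prod_univ_three] at herr
  have hfact : ((#(univ : Finset (Fin 3))).factorial : ℝ) = 6 := by norm_num [Nat.factorial]
  rw [herr, hfact, abs_mul, abs_div, abs_of_pos (by norm_num : (0 : ℝ) < 6)]
  exact mul_le_mul_of_nonneg_right (div_le_div_of_nonneg_right (hM ξ hξ) (by norm_num))
    (abs_nonneg _)

theorem abs_mul_sub_mul_sub_le {u v s : ℝ} (hs : s ∈ Set.Icc u v) :
    |(s - u) * (s - v)| ≤ (v - u) ^ 2 / 4 := by
  rw [abs_of_nonpos (mul_nonpos_of_nonneg_of_nonpos (sub_nonneg.2 hs.1) (sub_nonpos.2 hs.2))]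
  linarith [sq_nonneg ((s - u) + (s - v))]

theorem abs_mul_mul_sub_le {u v w s d : ℝ} (hs : s ∈ Set.Icc u v) (hw : |s - w| ≤ d) :
    |(s - w) * ((s - u) * (s - v))| ≤ d * ((v - u) ^ 2 / 4) := by
  rw [abs_mul]
  exact mul_le_mul hw (abs_mul_sub_mul_sub_le hs) (abs_nonneg _) ((abs_nonneg _).trans hw)

theorem norm_iteratedDerivWithin_le_sSup {𝕜 F : Type*} [NontriviallyNormedField 𝕜]
    [NormedAddCommGroup F] [NormedSpace 𝕜 F] {n : ℕ} {f : 𝕜 → F} {s : Set 𝕜} (hs : IsCompact s)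
    (hu : UniqueDiffOn 𝕜 s) (hf : ContDiffOn 𝕜 n f s) {x : 𝕜} (hx : x ∈ s) :
    ‖iteratedDerivWithin n f s x‖ ≤ sSup ((fun t => ‖iteratedDerivWithin n f s t‖) '' s) :=
  le_csSup (hs.image_of_continuousOn (hf.continuousOn_iteratedDerivWithin le_rfl hu).norm).bddAbove
    ⟨x, hx, rfl⟩

/-- The piecewise quadratic interpolant `L²_j y` used on the step `[j h, (j + 1) h]` of the uniform
grid of mesh `h`; the first step has no left neighbour and borrows the half node `h / 2`. -/
noncomputable def gridInterp (h : ℝ) (y : ℝ → ℝ) (j : ℕ) (s : ℝ) : ℝ :=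
  if j = 0 then lagInterp2 0 (h / 2) h (y 0) (y (h / 2)) (y h) s
  else lagInterp2 (((j : ℝ) - 1) * h) ((j : ℝ) * h) (((j : ℝ) + 1) * h)
    (y (((j : ℝ) - 1) * h)) (y ((j : ℝ) * h)) (y (((j : ℝ) + 1) * h)) s

theorem abs_sub_gridInterp_le {T h M : ℝ} (hh : 0 < h) {y : ℝ → ℝ}
    (hy : ContDiffOn ℝ 3 y (Set.Icc 0 T))
    (hM : ∀ t ∈ Set.Icc 0 T, |iteratedDerivWithin 3 y (Set.Icc 0 T) t| ≤ M)
    {j : ℕ} (hj : ((j : ℝ) + 1) * h ≤ T) {s : ℝ} (hs : s ∈ Set.Icc (j * h) ((j + 1) * h)) :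
    |y s - gridInterp h y j s| ≤ M / 12 * h ^ 3 := by
  have hsI : s ∈ Set.Icc 0 T := ⟨(by positivity : 0 ≤ (j : ℝ) * h).trans hs.1, hs.2.trans hj⟩
  have hM0 : 0 ≤ M := (abs_nonneg _).trans (hM s hsI)
  have of_nodal_le (ω : ℝ) (hω : |ω| ≤ 2 * h * (h ^ 2 / 4)) : M / 6 * |ω| ≤ M / 12 * h ^ 3 :=
    calc M / 6 * |ω| ≤ M / 6 * (2 * h * (h ^ 2 / 4)) := by gcongr
      _ = M / 12 * h ^ 3 := by ring
  unfold gridInterp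
  split_ifs with hj0
  · subst hj0
    simp only [Nat.cast_zero, zero_mul, zero_add, one_mul] at hj hs
    refine (abs_sub_lagInterp2_le hy hM le_rfl (half_pos hh) (half_lt_self hh) hj hsI).trans
      (of_nodal_le _ ?_)
    have hmid : |s - h / 2| ≤ 2 * h := abs_le.2 ⟨by linarith [hs.1], by linarith [hs.2]⟩
    convert abs_mul_mul_sub_le hs hmid using 2 <;> ring
  · have hj1 : (1 : ℝ) ≤ j := Nat.one_le_cast.2 (Nat.one_le_iff_ne_zero.2 hj0)
    refine (abs_sub_lagInterp2_le hy hM (mul_nonneg (sub_nonneg.2 hj1) hh.le) (by linarith)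
      (by linarith) hj hsI).trans (of_nodal_le _ ?_)
    have hleft : |s - (j - 1) * h| ≤ 2 * h := abs_le.2 ⟨by linarith [hs.1], by linarith [hs.2]⟩
    convert abs_mul_mul_sub_le hs hleft using 2 <;> ring

theorem integral_mul_exp_neg_mul_sub (β t a b : ℝ) :
    ∫ s in a..b, β * exp (-β * (t - s)) = exp (-β * (t - b)) - exp (-β * (t - a)) := by
  have hderiv (x : ℝ) :
      HasDerivAt (fun s => exp (-β * (t - s))) (β * exp (-β * (t - x))) x := by
    refine (((hasDerivAt_id x).const_sub t).const_mul (-β)).exp.congr_deriv ?_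
    simp only [id]
    ring
  exact intervalIntegral.integral_eq_sub_of_hasDerivAt (fun x _ => hderiv x)
    (Continuous.intervalIntegrable (by fun_prop) _ _)

theorem abs_mul_integral_mul_exp_le {β : ℝ} (hβ : 0 ≤ β) {K a b : ℝ} (hab : a ≤ b) {e : ℝ → ℝ}
    (he : ∀ s ∈ Set.Icc a b, |e s| ≤ K) (t : ℝ) :
    |β * ∫ s in a..b, e s * exp (-β * (t - s))| ≤
      K * (exp (-β * (t - b)) - exp (-β * (t - a))) := by
  rw [← integral_mul_exp_neg_mul_sub, ← intervalIntegral.integral_const_mul,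
    ← intervalIntegral.integral_const_mul, ← norm_eq_abs]
  refine intervalIntegral.norm_integral_le_of_norm_le hab (.of_forall fun s hs => ?_)
    (Continuous.intervalIntegrable (by fun_prop) _ _)
  calc ‖β * (e s * exp (-β * (t - s)))‖ = |e s| * (β * exp (-β * (t - s))) := by
        rw [norm_eq_abs, abs_mul, abs_mul, abs_of_nonneg hβ, abs_exp]; ring
    _ ≤ K * (β * exp (-β * (t - s))) := by
        gcongr
        exact he s (Set.Ioc_subset_Icc_self hs)

theorem abs_mul_sum_integral_mul_exp_le {β : ℝ} (hβ : 0 ≤ β) {K : ℝ} {t : ℕ → ℝ}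
    (ht : Monotone t) {m : ℕ} {e : ℕ → ℝ → ℝ}
    (he : ∀ j < m, ∀ s ∈ Set.Icc (t j) (t (j + 1)), |e j s| ≤ K) :
    |β * ∑ j ∈ range m, ∫ s in t j..t (j + 1), e j s * exp (-β * (t m - s))| ≤
      K * (1 - exp (-β * (t m - t 0))) := by
  rw [mul_sum]
  calc _ ≤ ∑ j ∈ range m, |β * ∫ s in t j..t (j + 1), e j s * exp (-β * (t m - s))| :=
        abs_sum_le_sum_abs _ _
    _ ≤ ∑ j ∈ range m, K * (exp (-β * (t m - t (j + 1))) - exp (-β * (t m - t j))) :=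
        sum_le_sum fun j hj => abs_mul_integral_mul_exp_le hβ (ht j.le_succ)
          (he j (mem_range.1 hj)) (t m)
    _ = K * (1 - exp (-β * (t m - t 0))) := by
        rw [← mul_sum, sum_range_sub fun j => exp (-β * (t m - t j)), sub_self, mul_zero, exp_zero]

/-- Truncation error of the quadratic-interpolation quadrature (with half node `h/2` on
the first interval): `|Tₙ₊₁| ≤ (‖y‴‖_∞/12) (1 - exp(-β tₙ₊₁)) h³`. -/
theorem quadratic_truncation_error
    (β T : ℝ) (N : ℕ) (h : ℝ) (hβ : 0 < β) (hT : 0 < T) (hh : h = T / (N + 1))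
    (y : ℝ → ℝ) (hy : ContDiffOn ℝ 3 y (Set.Icc 0 T)) :
    ∀ n, 1 ≤ n → n ≤ N →
      |β * ∑ j ∈ Finset.range (n + 1),
          ∫ s in ((j : ℝ) * h)..(((j : ℝ) + 1) * h),
            (y s -
              (if j = 0 then lagInterp2 0 (h / 2) h (y 0) (y (h / 2)) (y h) s
               else lagInterp2 (((j : ℝ) - 1) * h) ((j : ℝ) * h) (((j : ℝ) + 1) * h)
                  (y (((j : ℝ) - 1) * h)) (y ((j : ℝ) * h)) (y (((j : ℝ) + 1) * h)) s))
              * Real.exp (-β * (((n : ℝ) + 1) * h - s))|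
        ≤ (sSup ((fun t => |iteratedDerivWithin 3 y (Set.Icc (0 : ℝ) T) t|) ''
              Set.Icc (0 : ℝ) T) / 12)
            * (1 - Real.exp (-β * (((n : ℝ) + 1) * h))) * h ^ 3 := by
  intro n _ hnN
  have hh_pos : 0 < h := by rw [hh]; positivity
  have hgrid (j : ℕ) (hj : j < n + 1) : ((j : ℝ) + 1) * h ≤ T :=
    calc ((j : ℝ) + 1) * h ≤ (N + 1) * h := by gcongr; omega
      _ = T := by rw [hh]; field_simp
  have hM (t : ℝ) (ht : t ∈ Set.Icc 0 T) :=
    norm_iteratedDerivWithin_le_sSup isCompact_Icc (uniqueDiffOn_Icc hT) hy ht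
  have hmono : Monotone fun j : ℕ => (j : ℝ) * h := Nat.mono_cast.mul_const hh_pos.le
  have hsum := abs_mul_sum_integral_mul_exp_le hβ.le hmono fun j hj s hs =>
    abs_sub_gridInterp_le hh_pos hy hM (hgrid j hj) (by simpa only [Nat.cast_add_one] using hs)
  simp only [Nat.cast_add_one, Nat.cast_zero, zero_mul, sub_zero] at hsum
  exact hsum.trans_eq (mul_right_comm _ _ _)
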